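/- Let u₁, u₂ be two smooth solutions of the heat equation ∂ₜ u = Δ u on ℝⁿ × (0,1] with the same initial data in the sense that ∫_{B(0,R)} (u₁ − u₂)(x,t)² dx → 0 as t → 0⁺ for every R > 0. If there exist a > 0 and a positive nondecreasing function L with ∫₁^∞ r/L(r) dr = ∞ such that ∫₀¹ tᵃ ∫_{B(0,r)} (u₁ − u₂)(x,t)² dx dt ≤ e^{L(r)} for all r > 0, then u₁ ≡ u₂ on ℝⁿ × (0,1]. -/

import Mathlib

/-! For a heat solution `u` and a compactly supported weight `ψ`, integration by parts gives
`d/dt ∫ u²ψ² ≤ 2 ∫ u² (ψ ∂ₜψ + |∇ψ|²)`. The weight `e^{-κ√t} ηᵐ⁺¹` with a cutoff `η` and `m ≥ 2a`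
turns the time-weighted bound into a bound on `∫_{B(0,r)} u²` at every single time. The weight
`e^{-ρ²/(8(σ-t))} η`, with `ρ` a `1`-Lipschitz function that vanishes on `B(0,r)` and is of order
`r` where `∇η ≠ 0`, shows that if the energy in `B(0,2r)` never exceeds `e^H`, then over a time span
`r²/(C H)` the energy in `B(0,r)` exceeds the initial energy in `B(0,2r)` by at most `C/r²`. Going
backwards in time along the radii `2ʲr`, these time spans have an infinite sum because
`∫₁^∞ r/L(r) dr = ∞`, so time `0` is reached after finitely many steps with a total error `O(r⁻²)`,
and `r → ∞` gives `u = 0`. -/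

open MeasureTheory Filter Set Metric

/-- The Euclidean Laplacian of `g : ℝⁿ → ℝ`. -/
noncomputable def heatLap {n : ℕ} (g : EuclideanSpace ℝ (Fin n) → ℝ)
    (x : EuclideanSpace ℝ (Fin n)) : ℝ :=
  ∑ i : Fin n, fderiv ℝ (fun y => fderiv ℝ g y (EuclideanSpace.single i (1 : ℝ))) x
    (EuclideanSpace.single i (1 : ℝ))

open Function

open scoped Laplacian Topology

section Caccioppoli

variable {E : Type*} [NormedAddCommGroup E] [NormedSpace ℝ E] [MeasurableSpace E] [BorelSpace E]
  {μ : Measure E}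

theorem integrable_of_eq_zero_of_fderiv_eq_zero [IsFiniteMeasureOnCompacts μ] {f ψ : E → ℝ}
    (hψ : HasCompactSupport ψ) (hf : Continuous f)
    (h : ∀ x, ψ x = 0 → fderiv ℝ ψ x = 0 → f x = 0) : Integrable f μ :=
  hf.integrable_of_hasCompactSupport <| HasCompactSupport.intro hψ fun x hx =>
    h x (image_eq_zero_of_notMem_tsupport hx) (fderiv_of_notMem_tsupport ℝ hx)

theorem integral_mul_fderiv_fderiv_mul_sq_le [FiniteDimensional ℝ E] [μ.IsAddHaarMeasure]
    {g ψ : E → ℝ} (hg : ContDiff ℝ 2 g)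
    (hψ : ContDiff ℝ 1 ψ) (hψc : HasCompactSupport ψ) (v : E) :
    ∫ x, g x * fderiv ℝ (fun y => fderiv ℝ g y v) x v * ψ x ^ 2 ∂μ
      ≤ ∫ x, g x ^ 2 * fderiv ℝ ψ x v ^ 2 ∂μ := by
  have hg₁ : ContDiff ℝ 1 (fun y => fderiv ℝ g y v) :=
    (hg.fderiv_right (by norm_num)).clm_apply contDiff_const
  have : Continuous (fun y => fderiv ℝ (fun z => fderiv ℝ g z v) y v) :=
    (hg₁.continuous_fderiv one_ne_zero).clm_apply continuous_const
  have : Continuous (fun y => fderiv ℝ ψ y v) :=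
    (hψ.continuous_fderiv one_ne_zero).clm_apply continuous_const
  have hgd := hg.differentiable two_ne_zero
  have hψd := hψ.differentiable one_ne_zero
  have hint {f : E → ℝ} := integrable_of_eq_zero_of_fderiv_eq_zero (μ := μ) (f := f) hψc
  have hcont := hg.continuous
  have hcont₁ := hg₁.continuous
  have hcontψ := hψ.continuous
  have hprod (x : E) : fderiv ℝ (fun y => g y * ψ y ^ 2) x v
      = fderiv ℝ g x v * ψ x ^ 2 + 2 * (g x * ψ x * fderiv ℝ ψ x v) := by
    rw [((hgd x).hasFDerivAt.fun_mul ((hψd x).hasFDerivAt.pow 2)).fderiv]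
    simp only [add_apply, smul_apply, smul_eq_mul]
    ring
  have hint₁ : Integrable (fun x => fderiv ℝ (fun y => g y * ψ y ^ 2) x v * fderiv ℝ g x v) μ := by
    simp only [hprod]
    exact hint (by fun_prop) fun x h₀ _ => by simp [h₀]
  calc ∫ x, g x * fderiv ℝ (fun y => fderiv ℝ g y v) x v * ψ x ^ 2 ∂μ
      = ∫ x, (g x * ψ x ^ 2) * fderiv ℝ (fun y => fderiv ℝ g y v) x v ∂μ := by
        congr 1 with x
        ring
    _ = -∫ x, fderiv ℝ (fun y => g y * ψ y ^ 2) x v * fderiv ℝ g x v ∂μ :=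
        integral_mul_fderiv_eq_neg_fderiv_mul_of_integrable hint₁
          (hint (by fun_prop) fun x h₀ _ => by simp [h₀])
          (hint (by fun_prop) fun x h₀ _ => by simp [h₀])
          (fun x _ => (hgd.mul (hψd.pow 2)) x) fun x _ => hg₁.differentiable one_ne_zero x
    _ = ∫ x, -(fderiv ℝ (fun y => g y * ψ y ^ 2) x v * fderiv ℝ g x v) ∂μ :=
        (integral_neg _).symm
    _ ≤ ∫ x, g x ^ 2 * fderiv ℝ ψ x v ^ 2 ∂μ := by
        refine integral_mono hint₁.neg
          (hint (by fun_prop) fun x _ h₁ => by simp [h₁]) fun x => ?_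
        simp only [hprod]
        linarith [sq_nonneg (fderiv ℝ g x v * ψ x + g x * fderiv ℝ ψ x v)]

end Caccioppoli

section Laplacian

variable {E : Type*} [NormedAddCommGroup E] [InnerProductSpace ℝ E] [FiniteDimensional ℝ E]

theorem laplacian_eq_sum_fderiv_fderiv {ι : Type*} [Fintype ι] (b : OrthonormalBasis ι ℝ E)
    {g : E → ℝ} (hg : ContDiff ℝ 2 g) (x : E) :
    Δ g x = ∑ i, fderiv ℝ (fun y => fderiv ℝ g y (b i)) x (b i) := by
  have hd : DifferentiableAt ℝ (fderiv ℝ g) x :=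
    (hg.fderiv_right (m := 1) (by norm_num)).differentiable one_ne_zero x
  rw [InnerProductSpace.laplacian_eq_iteratedFDeriv_orthonormalBasis g b]
  refine Finset.sum_congr rfl fun i _ => ?_
  rw [iteratedFDeriv_two_apply, fderiv_clm_apply hd (differentiableAt_const _)]
  simp

theorem heatLap_eq_laplacian {n : ℕ} {g : EuclideanSpace ℝ (Fin n) → ℝ} (hg : ContDiff ℝ 2 g) :
    heatLap g = Δ g := by
  ext x
  simp [heatLap, laplacian_eq_sum_fderiv_fderiv (EuclideanSpace.basisFun (Fin n) ℝ) hg]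

theorem integral_mul_laplacian_mul_sq_le [MeasurableSpace E] [BorelSpace E] {μ : Measure E}
    [μ.IsAddHaarMeasure] {g ψ : E → ℝ} (hg : ContDiff ℝ 2 g) (hψ : ContDiff ℝ 1 ψ)
    (hψc : HasCompactSupport ψ) :
    ∫ x, g x * Δ g x * ψ x ^ 2 ∂μ ≤ ∫ x, g x ^ 2 * ‖fderiv ℝ ψ x‖ ^ 2 ∂μ := by
  let b := stdOrthonormalBasis ℝ E
  have (v : E) : Continuous (fun y => fderiv ℝ ψ y v) :=
    (hψ.continuous_fderiv one_ne_zero).clm_apply continuous_const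
  have (v : E) : Continuous (fun y => fderiv ℝ (fun z => fderiv ℝ g z v) y v) :=
    (((hg.fderiv_right (m := 1) (by norm_num)).clm_apply contDiff_const).continuous_fderiv
      one_ne_zero).clm_apply continuous_const
  have hcont := hg.continuous
  have hcontψ := hψ.continuous
  have hint {f : E → ℝ} := integrable_of_eq_zero_of_fderiv_eq_zero (μ := μ) (f := f) hψc
  simp only [laplacian_eq_sum_fderiv_fderiv b hg, OrthonormalBasis.norm_dual b, Finset.mul_sum,
    Finset.sum_mul]
  rw [integral_finsetSum _ fun i _ => hint (by fun_prop) fun x h₀ _ => by simp [h₀],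
    integral_finsetSum _ fun i _ => hint (by fun_prop) fun x _ h₁ => by simp [h₁]]
  exact Finset.sum_le_sum fun i _ => integral_mul_fderiv_fderiv_mul_sq_le hg hψ hψc (b i)

end Laplacian

section Parametric

theorem continuousOn_setIntegral_ball_of_continuousOn_uncurry {E : Type*} [PseudoMetricSpace E]
    [ProperSpace E] [MeasurableSpace E] [OpensMeasurableSpace E] {μ : Measure E}
    [IsFiniteMeasureOnCompacts μ] {G : ℝ → E → ℝ} {I : Set ℝ} (hI : IsOpen I)
    (hG : ContinuousOn (uncurry G) (I ×ˢ univ)) (c : E) (r : ℝ) :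
    ContinuousOn (fun t => ∫ x in ball c r, G t x ∂μ) I := by
  have := hI.locallyCompactSpace
  have hres : Continuous (uncurry fun (t : I) x => G t x) :=
    hG.comp_continuous (f := fun p : I × E => ((p.1 : ℝ), p.2)) (by fun_prop) fun p =>
      ⟨p.1.2, mem_univ _⟩
  have := continuous_parametric_integral_of_continuous (μ := μ.restrict (ball c r)) hres
    (isCompact_closedBall c r)
  rw [Measure.restrict_restrict measurableSet_closedBall,
    inter_eq_self_of_subset_right ball_subset_closedBall] at this
  exact continuousOn_iff_continuous_domRestrict.2 this

variable {E : Type*} [NormedAddCommGroup E] [NormedSpace ℝ E] {G : ℝ → E → ℝ} {I : Set ℝ}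
  {n : WithTop ℕ∞} {t : ℝ}

theorem contDiff_of_contDiffOn_uncurry (hG : ContDiffOn ℝ n (uncurry G) (I ×ˢ univ))
    (ht : t ∈ I) : ContDiff ℝ n (G t) :=
  contDiffOn_univ.1 <| hG.comp (f := fun x => (t, x)) (by fun_prop) fun x _ => ⟨ht, mem_univ x⟩

theorem hasDerivAt_fderiv_of_contDiffOn_uncurry (hI : IsOpen I)
    (hG : ContDiffOn ℝ 1 (uncurry G) (I ×ˢ univ)) (ht : t ∈ I) (x : E) :
    HasDerivAt (fun s => G s x) (fderiv ℝ (uncurry G) (t, x) (1, 0)) t :=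
  HasFDerivAt.comp_hasDerivAt (f := fun s => (s, x)) t
    ((hG.contDiffAt ((hI.prod isOpen_univ).mem_nhds ⟨ht, mem_univ x⟩)).differentiableAt
      one_ne_zero).hasFDerivAt ((hasDerivAt_id t).prodMk (hasDerivAt_const t x))

theorem hasDerivAt_of_contDiffOn_uncurry (hI : IsOpen I)
    (hG : ContDiffOn ℝ 1 (uncurry G) (I ×ˢ univ)) (ht : t ∈ I) (x : E) :
    HasDerivAt (fun s => G s x) (deriv (fun s => G s x) t) t :=
  (hasDerivAt_fderiv_of_contDiffOn_uncurry hI hG ht x).differentiableAt.hasDerivAt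

theorem continuousOn_deriv_of_contDiffOn_uncurry (hI : IsOpen I)
    (hG : ContDiffOn ℝ 1 (uncurry G) (I ×ˢ univ)) :
    ContinuousOn (uncurry fun t x => deriv (fun s => G s x) t) (I ×ˢ univ) :=
  ((hG.continuousOn_fderiv_of_isOpen (hI.prod isOpen_univ) le_rfl).clm_apply
    continuousOn_const).congr fun p hp =>
      (hasDerivAt_fderiv_of_contDiffOn_uncurry hI hG hp.1 p.2).deriv

theorem continuous_deriv_of_contDiffOn_uncurry (hI : IsOpen I)
    (hG : ContDiffOn ℝ 1 (uncurry G) (I ×ˢ univ)) (ht : t ∈ I) :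
    Continuous fun x => deriv (fun s => G s x) t :=
  (continuousOn_deriv_of_contDiffOn_uncurry hI hG).comp_continuous (f := fun x : E => (t, x))
    (by fun_prop) fun x => ⟨ht, mem_univ x⟩

variable [MeasurableSpace E] [OpensMeasurableSpace E] {μ : Measure E}
  [IsFiniteMeasureOnCompacts μ] {K : Set E}

theorem hasDerivAt_integral_of_contDiffOn_uncurry (hI : IsOpen I)
    (hG : ContDiffOn ℝ 1 (uncurry G) (I ×ˢ univ)) (hK : IsCompact K)
    (hGK : ∀ s ∈ I, ∀ x ∉ K, G s x = 0) (ht : t ∈ I) :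
    HasDerivAt (fun s => ∫ x, G s x ∂μ) (∫ x, deriv (fun s => G s x) t ∂μ) t := by
  have hcont {s : ℝ} (hs : s ∈ I) : Continuous (G s) :=
    (contDiff_of_contDiffOn_uncurry hG hs).continuous
  obtain ⟨δ, hδ, hδI⟩ := nhds_basis_closedBall.mem_iff.1 (hI.mem_nhds ht)
  obtain ⟨M, hM⟩ := ((isCompact_closedBall t δ).prod hK).exists_bound_of_continuousOn
    ((continuousOn_deriv_of_contDiffOn_uncurry hI hG).mono (prod_mono hδI (subset_univ _)))
  have hderiv_eq_zero {s : ℝ} (hs : s ∈ I) {x : E} (hx : x ∉ K) :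
      deriv (fun s => G s x) s = 0 := by
    have : (fun s => G s x) =ᶠ[𝓝 s] fun _ => 0 :=
      mem_of_superset (hI.mem_nhds hs) fun τ hτ => hGK τ hτ x hx
    simp [this.deriv_eq]
  refine (hasDerivAt_integral_of_dominated_loc_of_deriv_le (F := G)
    (F' := fun s x => deriv (fun τ => G τ x) s) (bound := K.indicator fun _ => M)
    (closedBall_mem_nhds t hδ) ?_ ?_ ?_ ?_ ?_ ?_).2
  · filter_upwards [hI.mem_nhds ht] with s hs using (hcont hs).aestronglyMeasurable
  · exact (hcont ht).integrable_of_hasCompactSupport (HasCompactSupport.intro hK (hGK t ht))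
  · exact (continuous_deriv_of_contDiffOn_uncurry hI hG ht).aestronglyMeasurable
  · refine Eventually.of_forall fun x s hs => ?_
    by_cases hx : x ∈ K
    · simpa [hx] using hM (s, x) ⟨hs, hx⟩
    · simp [hx, hderiv_eq_zero (hδI hs) hx]
  · exact (integrable_indicator_iff hK.measurableSet).2 (integrableOn_const hK.measure_ne_top)
  · exact Eventually.of_forall fun x s hs => hasDerivAt_of_contDiffOn_uncurry hI hG (hδI hs) x

end Parametric

section EnergyWeight

variable {E : Type*} [NormedAddCommGroup E] [NormedSpace ℝ E]

/-- Weights `ψ` on `I × B(0, R)` whose squares `ψ²` localize the energy `∫ u²` in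
`localEnergy_le_of_isEnergyWeight`; they vanish off the open ball `B(0, R)`. -/
structure IsEnergyWeight (ψ : ℝ → E → ℝ) (R : ℝ) (I : Set ℝ) : Prop where
  contDiffOn : ContDiffOn ℝ 1 (uncurry ψ) (I ×ˢ univ)
  nonneg : ∀ t ∈ I, ∀ x, 0 ≤ ψ t x
  le_one : ∀ t ∈ I, ∀ x, ψ t x ≤ 1
  eq_zero : ∀ t ∈ I, ∀ x ∉ ball 0 R, ψ t x = 0

namespace IsEnergyWeight

variable {ψ : ℝ → E → ℝ} {R t : ℝ} {I : Set ℝ}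

theorem fderiv_eq_zero (hψ : IsEnergyWeight ψ R I) (ht : t ∈ I) {x : E} (hx : x ∉ ball 0 R) :
    fderiv ℝ (ψ t) x = 0 :=
  IsLocalMin.fderiv_eq_zero <| Eventually.of_forall fun y => by
    simpa only [hψ.eq_zero t ht x hx] using hψ.nonneg t ht y

theorem hasCompactSupport [ProperSpace E] (hψ : IsEnergyWeight ψ R I) (ht : t ∈ I) :
    HasCompactSupport (ψ t) :=
  HasCompactSupport.intro (isCompact_closedBall 0 R) fun x hx =>
    hψ.eq_zero t ht x fun h => hx (ball_subset_closedBall h)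

end IsEnergyWeight

/-- Half the growth rate `∂ₜ(ψ²)/2 + |∇ψ|²` that the weight `ψ²` permits in the energy estimate for
the heat equation. -/
noncomputable def energyRate (ψ : ℝ → E → ℝ) (t : ℝ) (x : E) : ℝ :=
  ψ t x * deriv (fun τ => ψ τ x) t + ‖fderiv ℝ (ψ t) x‖ ^ 2

end EnergyWeight

section HeatSolution

variable {E : Type*} [NormedAddCommGroup E] [InnerProductSpace ℝ E] [FiniteDimensional ℝ E]

/-- Classical solutions of the heat equation `∂ₜu = Δu` on `I × E`, of class `C²` jointly in time
and space. -/
structure IsHeatSolutionOn (u : ℝ → E → ℝ) (I : Set ℝ) : Prop where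
  contDiffOn : ContDiffOn ℝ 2 (uncurry u) (I ×ˢ univ)
  deriv_eq : ∀ t ∈ I, ∀ x, deriv (fun s => u s x) t = Δ (u t) x

variable {u v ψ : ℝ → E → ℝ} {I J : Set ℝ} {r R s t T : ℝ}

theorem IsHeatSolutionOn.mono (hu : IsHeatSolutionOn u I)
    (hJI : J ⊆ I) : IsHeatSolutionOn u J :=
  ⟨hu.contDiffOn.mono (prod_mono hJI subset_rfl), fun t ht => hu.deriv_eq t (hJI ht)⟩

theorem IsHeatSolutionOn.sub (hI : IsOpen I)
    (hu : IsHeatSolutionOn u I) (hv : IsHeatSolutionOn v I) :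
    IsHeatSolutionOn (fun t x => u t x - v t x) I where
  contDiffOn := hu.contDiffOn.sub hv.contDiffOn
  deriv_eq t ht x := by
    have hu₂ := contDiff_of_contDiffOn_uncurry hu.contDiffOn ht
    have hv₂ := contDiff_of_contDiffOn_uncurry hv.contDiffOn ht
    rw [deriv_fun_sub
      (hasDerivAt_of_contDiffOn_uncurry hI (hu.contDiffOn.of_le one_le_two) ht x).differentiableAt
      (hasDerivAt_of_contDiffOn_uncurry hI (hv.contDiffOn.of_le one_le_two) ht x).differentiableAt,
      hu.deriv_eq t ht, hv.deriv_eq t ht]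
    exact (hu₂.contDiffAt.laplacian_sub hv₂.contDiffAt).symm

theorem IsHeatSolutionOn.continuous (hu : IsHeatSolutionOn u I) (ht : t ∈ I) :
    Continuous (u t) :=
  (contDiff_of_contDiffOn_uncurry hu.contDiffOn ht).continuous

variable [MeasurableSpace E] [BorelSpace E]

/-- The energy `∫_{B(0, r)} u(x, t)² dx` of `u` in the ball of radius `r` at time `t`. -/
noncomputable def localEnergy (u : ℝ → E → ℝ) (r t : ℝ) : ℝ :=
  ∫ x in ball 0 r, u t x ^ 2

theorem localEnergy_nonneg (u : ℝ → E → ℝ) (r t : ℝ) : 0 ≤ localEnergy u r t :=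
  integral_nonneg fun _ => sq_nonneg _

theorem integrableOn_ball_sq {f : E → ℝ} (hf : Continuous f) (r : ℝ) :
    IntegrableOn (fun x => f x ^ 2) (ball 0 r) :=
  ((hf.pow 2).continuousOn.integrableOn_compact (isCompact_closedBall 0 r)).mono_set
    ball_subset_closedBall

namespace IsHeatSolutionOn

theorem localEnergy_mono (hu : IsHeatSolutionOn u I) (ht : t ∈ I) (hrR : r ≤ R) :
    localEnergy u r t ≤ localEnergy u R t :=
  setIntegral_mono_set (integrableOn_ball_sq (hu.continuous ht) R)
    (Eventually.of_forall fun _ => sq_nonneg _) (ball_subset_ball hrR).eventuallyLE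

theorem continuousOn_localEnergy (hu : IsHeatSolutionOn u I) (hI : IsOpen I) (r : ℝ) :
    ContinuousOn (localEnergy u r) I :=
  continuousOn_setIntegral_ball_of_continuousOn_uncurry (G := fun t x => u t x ^ 2) hI
    (hu.contDiffOn.pow 2).continuousOn 0 r

theorem integral_deriv_mul_sq_le_integral_energyRate (hu : IsHeatSolutionOn u I) (hI : IsOpen I)
    (hψ : IsEnergyWeight ψ R I) (ht : t ∈ I) :
    ∫ x, deriv (fun τ => (u τ x * ψ τ x) ^ 2) t ≤ 2 * ∫ x, u t x ^ 2 * energyRate ψ t x := by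
  have hu₁ : ContDiffOn ℝ 1 (uncurry u) (I ×ˢ univ) := hu.contDiffOn.of_le one_le_two
  have hut := continuous_deriv_of_contDiffOn_uncurry hI hu₁ ht
  have hψt := continuous_deriv_of_contDiffOn_uncurry hI hψ.contDiffOn ht
  have hψ₁ := contDiff_of_contDiffOn_uncurry hψ.contDiffOn ht
  have : Continuous (fderiv ℝ (ψ t)) := hψ₁.continuous_fderiv one_ne_zero
  have hψ₀ := hψ₁.continuous
  have hu₀ := hu.continuous ht
  have hint {f : E → ℝ} :=
    integrable_of_eq_zero_of_fderiv_eq_zero (μ := volume) (f := f) (hψ.hasCompactSupport ht)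
  have hderiv (x : E) : deriv (fun τ => (u τ x * ψ τ x) ^ 2) t
      = 2 * (u t x * deriv (fun τ => u τ x) t * ψ t x ^ 2
        + u t x ^ 2 * (ψ t x * deriv (fun τ => ψ τ x) t)) := by
    rw [(((hasDerivAt_of_contDiffOn_uncurry hI hu₁ ht x).fun_mul
      (hasDerivAt_of_contDiffOn_uncurry hI hψ.contDiffOn ht x)).fun_pow 2).deriv]
    ring
  calc ∫ x, deriv (fun τ => (u τ x * ψ τ x) ^ 2) t
      = 2 * (∫ x, u t x * Δ (u t) x * ψ t x ^ 2)
          + 2 * ∫ x, u t x ^ 2 * (ψ t x * deriv (fun τ => ψ τ x) t) := by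
        simp only [hderiv, ← hu.deriv_eq t ht]
        rw [integral_const_mul, integral_add (hint (by fun_prop) fun x h₀ _ => by simp [h₀])
          (hint (by fun_prop) fun x h₀ _ => by simp [h₀]), mul_add]
    _ ≤ 2 * (∫ x, u t x ^ 2 * ‖fderiv ℝ (ψ t) x‖ ^ 2)
          + 2 * ∫ x, u t x ^ 2 * (ψ t x * deriv (fun τ => ψ τ x) t) := by
        gcongr 2 * ?_ + _
        exact integral_mul_laplacian_mul_sq_le (μ := volume)
          (contDiff_of_contDiffOn_uncurry hu.contDiffOn ht) hψ₁ (hψ.hasCompactSupport ht)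
    _ = 2 * ∫ x, u t x ^ 2 * energyRate ψ t x := by
        simp only [energyRate, mul_add (_ ^ 2)]
        rw [integral_add (hint (by fun_prop) fun x h₀ _ => by simp [h₀])
          (hint (by fun_prop) fun x _ h₁ => by simp [h₁])]
        ring

theorem integral_sq_mul_energyRate_le (hu : IsHeatSolutionOn u I) (hI : IsOpen I)
    (hψ : IsEnergyWeight ψ R I) (ht : t ∈ I) {g : ℝ}
    (hg : ∀ x ∈ ball 0 R, energyRate ψ t x ≤ g) :
    ∫ x, u t x ^ 2 * energyRate ψ t x ≤ g * localEnergy u R t := by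
  have hψt := continuous_deriv_of_contDiffOn_uncurry hI hψ.contDiffOn ht
  have hψ₁ := contDiff_of_contDiffOn_uncurry hψ.contDiffOn ht
  have : Continuous (fderiv ℝ (ψ t)) := hψ₁.continuous_fderiv one_ne_zero
  have hψ₀ := hψ₁.continuous
  have hu₀ := hu.continuous ht
  have hint : Integrable fun x => u t x ^ 2 * energyRate ψ t x :=
    integrable_of_eq_zero_of_fderiv_eq_zero (hψ.hasCompactSupport ht)
      (by unfold energyRate; fun_prop) fun x h₀ h₁ => by simp [energyRate, h₀, h₁]
  calc ∫ x, u t x ^ 2 * energyRate ψ t x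
      = ∫ x in ball 0 R, u t x ^ 2 * energyRate ψ t x := by
        rw [setIntegral_eq_integral_of_forall_compl_eq_zero fun x hx => by
          simp [energyRate, hψ.eq_zero t ht x hx, hψ.fderiv_eq_zero ht hx]]
    _ ≤ ∫ x in ball 0 R, g * u t x ^ 2 := by
        refine setIntegral_mono_on hint.integrableOn
          ((integrableOn_ball_sq hu₀ R).const_mul g) measurableSet_ball fun x hx => ?_
        rw [mul_comm g]
        gcongr
        exact hg x hx
    _ = g * localEnergy u R t := by rw [integral_const_mul, localEnergy]

theorem integral_mul_sq_le (hu : IsHeatSolutionOn u I) (hI : IsOpen I)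
    (hψ : IsEnergyWeight ψ R I) (hsT : s ≤ T) (hI' : Icc s T ⊆ I) {g : ℝ → ℝ}
    (hg : ContinuousOn g (Icc s T))
    (hψg : ∀ t ∈ Ioo s T, ∀ x ∈ ball 0 R, energyRate ψ t x ≤ g t) :
    ∫ x, (u T x * ψ T x) ^ 2
      ≤ (∫ x, (u s x * ψ s x) ^ 2) + 2 * ∫ t in s..T, g t * localEnergy u R t := by
  have hderiv {t : ℝ} (ht : t ∈ I) : HasDerivAt (fun τ => ∫ x, (u τ x * ψ τ x) ^ 2)
      (∫ x, deriv (fun τ => (u τ x * ψ τ x) ^ 2) t) t :=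
    hasDerivAt_integral_of_contDiffOn_uncurry (G := fun τ x => (u τ x * ψ τ x) ^ 2) hI
      (((hu.contDiffOn.of_le one_le_two).mul hψ.contDiffOn).pow 2) (isCompact_closedBall 0 R)
      (fun τ hτ x hx => by
        simp [hψ.eq_zero τ hτ x fun h => hx (ball_subset_closedBall h)]) ht
  have hcont : ContinuousOn (fun t => 2 * (g t * localEnergy u R t)) (Icc s T) :=
    (hg.mul ((hu.continuousOn_localEnergy hI R).mono hI')).const_mul 2
  have := intervalIntegral.sub_le_integral_of_hasDeriv_right_of_le hsT
    (fun t ht => (hderiv (hI' ht)).continuousAt.continuousWithinAt)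
    (fun t ht => (hderiv (hI' (Ioo_subset_Icc_self ht))).hasDerivWithinAt)
    (hcont.integrableOn_compact isCompact_Icc) fun t ht =>
      have ht' : t ∈ I := hI' (Ioo_subset_Icc_self ht)
      (hu.integral_deriv_mul_sq_le_integral_energyRate hI hψ ht').trans <|
        mul_le_mul_of_nonneg_left
          (hu.integral_sq_mul_energyRate_le hI hψ ht' (hψg t ht)) zero_le_two
  rw [intervalIntegral.integral_const_mul] at this
  linarith

theorem localEnergy_le_of_isEnergyWeight (hu : IsHeatSolutionOn u I) (hI : IsOpen I)
    (hψ : IsEnergyWeight ψ R I) (hsT : s ≤ T) (hI' : Icc s T ⊆ I) {g : ℝ → ℝ}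
    (hg : ContinuousOn g (Icc s T))
    (hψg : ∀ t ∈ Ioo s T, ∀ x ∈ ball 0 R, energyRate ψ t x ≤ g t)
    {c : ℝ} (hc : 0 ≤ c) (hψc : ∀ x ∈ ball 0 r, c ≤ ψ T x) :
    c ^ 2 * localEnergy u r T
      ≤ localEnergy u R s + 2 * ∫ t in s..T, g t * localEnergy u R t := by
  have hs : s ∈ I := hI' (left_mem_Icc.2 hsT)
  have hT : T ∈ I := hI' (right_mem_Icc.2 hsT)
  have hint {t : ℝ} (ht : t ∈ I) : Integrable fun x => (u t x * ψ t x) ^ 2 :=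
    integrable_of_eq_zero_of_fderiv_eq_zero (hψ.hasCompactSupport ht)
      (((hu.continuous ht).mul
        (contDiff_of_contDiffOn_uncurry hψ.contDiffOn ht).continuous).pow 2)
      fun x h₀ _ => by simp [h₀]
  have hlower : c ^ 2 * localEnergy u r T ≤ ∫ x, (u T x * ψ T x) ^ 2 := by
    rw [localEnergy, ← integral_const_mul]
    refine (setIntegral_mono_on ((integrableOn_ball_sq (hu.continuous hT) r).const_mul _)
      (hint hT).integrableOn measurableSet_ball fun x hx => ?_).trans
        (setIntegral_le_integral (hint hT) (Eventually.of_forall fun _ => sq_nonneg _))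
    rw [mul_pow, mul_comm]
    gcongr
    exact hψc x hx
  have hupper : ∫ x, (u s x * ψ s x) ^ 2 ≤ localEnergy u R s := by
    rw [← setIntegral_eq_integral_of_forall_compl_eq_zero (s := ball 0 R) fun x hx => by
      simp [hψ.eq_zero s hs x hx]]
    refine setIntegral_mono_on (hint hs).integrableOn (integrableOn_ball_sq (hu.continuous hs) R)
      measurableSet_ball fun x _ => ?_
    rw [mul_pow]
    exact mul_le_of_le_one_right (sq_nonneg _) (pow_le_one₀ (hψ.nonneg s hs x) (hψ.le_one s hs x))
  linarith [hu.integral_mul_sq_le hI hψ hsT hI' hg hψg]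

end IsHeatSolutionOn

end HeatSolution

section Cutoff

theorem exists_abs_deriv_smoothTransition_le :
    ∃ C > 0, ∀ x, |deriv Real.smoothTransition x| ≤ C := by
  have hcont : Continuous (deriv Real.smoothTransition) :=
    (Real.smoothTransition.contDiff (n := 1)).continuous_deriv le_rfl
  obtain ⟨C, hC⟩ := (isCompact_Icc (a := (0 : ℝ)) (b := 1)).exists_bound_of_continuousOn
    hcont.continuousOn
  refine ⟨max C 1, by positivity, fun x => ?_⟩
  by_cases hx : x ∈ Icc (0 : ℝ) 1
  · exact (hC x hx).trans (le_max_left _ _)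
  have hzero : deriv Real.smoothTransition x = 0 := by
    rcases not_and_or.1 hx with h | h
    · refine IsLocalMin.deriv_eq_zero <| Eventually.of_forall fun y => ?_
      rw [Real.smoothTransition.zero_of_nonpos (not_le.1 h).le]
      exact Real.smoothTransition.nonneg y
    · refine IsLocalMax.deriv_eq_zero <| Eventually.of_forall fun y => ?_
      rw [Real.smoothTransition.one_of_one_le (not_le.1 h).le]
      exact Real.smoothTransition.le_one y
  simp [hzero]

variable {E : Type*} [NormedAddCommGroup E]

/-- A smooth radial cutoff function between the balls `B(0, r)`, where it is `1`, and `B(0, R)`,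
off which it vanishes. It depends on `‖x‖²` rather than on `‖x‖` so as to be smooth at `0`. -/
noncomputable def radialCutoff (r R : ℝ) (x : E) : ℝ :=
  Real.smoothTransition ((R ^ 2 - ‖x‖ ^ 2) / (R ^ 2 - r ^ 2))

namespace radialCutoff

variable {r R : ℝ} {x : E}

theorem nonneg (r R : ℝ) (x : E) : 0 ≤ radialCutoff r R x := Real.smoothTransition.nonneg _

theorem le_one (r R : ℝ) (x : E) : radialCutoff r R x ≤ 1 := Real.smoothTransition.le_one _

theorem eq_one (hr : 0 ≤ r) (hrR : r < R) (hx : ‖x‖ ≤ r) : radialCutoff r R x = 1 := by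
  refine Real.smoothTransition.one_of_one_le ((one_le_div (by nlinarith)).2 ?_)
  gcongr

theorem eq_zero (hr : 0 ≤ r) (hrR : r < R) (hx : R ≤ ‖x‖) : radialCutoff r R x = 0 :=
  Real.smoothTransition.zero_of_nonpos <|
    div_nonpos_of_nonpos_of_nonneg (by nlinarith) (by nlinarith)

variable [InnerProductSpace ℝ E]

theorem contDiff (r R : ℝ) : ContDiff ℝ 1 (radialCutoff r R : E → ℝ) :=
  Real.smoothTransition.contDiff.comp
    ((contDiff_const.sub (contDiff_norm_sq ℝ)).div_const _)

theorem fderiv_eq_zero (hr : 0 ≤ r) (hrR : r < R) (hx : ‖x‖ ≤ r) :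
    fderiv ℝ (radialCutoff r R) x = 0 :=
  IsLocalMax.fderiv_eq_zero <| Eventually.of_forall fun y => by
    simpa only [eq_one hr hrR hx] using le_one r R y

theorem exists_norm_fderiv_le : ∃ C > 0, ∀ {r R : ℝ}, 0 ≤ r → r < R → ∀ x : E,
    ‖fderiv ℝ (radialCutoff r R) x‖ ≤ C / (R - r) := by
  obtain ⟨C, hC, hbound⟩ := exists_abs_deriv_smoothTransition_le
  refine ⟨2 * C, by positivity, fun {r R} hr hrR x => ?_⟩
  have hd : 0 < R ^ 2 - r ^ 2 := by nlinarith
  have hsub : 0 < R - r := sub_pos.2 hrR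
  rcases le_or_gt R ‖x‖ with hx | hx
  · have hzero : fderiv ℝ (radialCutoff r R) x = 0 :=
      IsLocalMin.fderiv_eq_zero <| Eventually.of_forall fun y => by
        simpa only [eq_zero hr hrR hx] using nonneg r R y
    rw [hzero, norm_zero]
    positivity
  set y := (R ^ 2 - ‖x‖ ^ 2) / (R ^ 2 - r ^ 2)
  have hinner : HasFDerivAt (fun z : E => (R ^ 2 - ‖z‖ ^ 2) / (R ^ 2 - r ^ 2))
      ((R ^ 2 - r ^ 2)⁻¹ • (-((2 : ℝ) • innerSL ℝ x) : E →L[ℝ] ℝ)) x := by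
    simpa only [div_eq_mul_inv, ofNat_smul_eq_nsmul] using
      ((hasStrictFDerivAt_norm_sq x).hasFDerivAt.const_sub (R ^ 2)).mul_const (R ^ 2 - r ^ 2)⁻¹
  have houter : HasDerivAt Real.smoothTransition (deriv Real.smoothTransition y) y :=
    ((Real.smoothTransition.contDiff (n := 1)).differentiable one_ne_zero y).hasDerivAt
  calc ‖fderiv ℝ (radialCutoff r R) x‖
      = |deriv Real.smoothTransition y| * ((R ^ 2 - r ^ 2)⁻¹ * (2 * ‖x‖)) := by
        rw [show fderiv ℝ (radialCutoff r R) x = _ from (houter.comp_hasFDerivAt x hinner).fderiv]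
        simp only [norm_smul, norm_neg, innerSL_apply_norm, Real.norm_eq_abs, abs_inv,
          abs_of_pos hd, abs_two]
    _ ≤ C * ((R ^ 2 - r ^ 2)⁻¹ * (2 * (R + r))) := by
        gcongr
        · exact hbound y
        · linarith
    _ = 2 * C / (R - r) := by
        field_simp
        ring

theorem norm_fderiv_mul_one_sub_le_one {C : ℝ} (hC : 0 < C) (hrR : r < R)
    (h : ‖fderiv ℝ (radialCutoff r R) x‖ ≤ C / (R - r)) :
    ‖fderiv ℝ (fun y : E => (R - r) / C * (1 - radialCutoff r R y)) x‖ ≤ 1 := by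
  have hsub : 0 < R - r := sub_pos.2 hrR
  rw [((((contDiff r R).differentiable one_ne_zero x).hasFDerivAt.const_sub 1).const_mul
    ((R - r) / C)).fderiv, norm_smul, norm_neg, Real.norm_of_nonneg (by positivity)]
  calc (R - r) / C * ‖fderiv ℝ (radialCutoff r R) x‖
      ≤ (R - r) / C * (C / (R - r)) := by gcongr
    _ = 1 := by field_simp

end radialCutoff

end Cutoff

section Weights

variable {E : Type*} [NormedAddCommGroup E]

theorem isEnergyWeight_exp_neg_mul_radialCutoff_pow [InnerProductSpace ℝ E] {ξ : ℝ → E → ℝ}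
    {r R : ℝ} {I : Set ℝ} {k : ℕ} (hr : 0 ≤ r) (hrR : r < R) (hk : k ≠ 0)
    (hξ : ContDiffOn ℝ 1 (uncurry ξ) (I ×ˢ univ)) (hξ₀ : ∀ t ∈ I, ∀ x, 0 ≤ ξ t x) :
    IsEnergyWeight (fun t x => Real.exp (-ξ t x) * radialCutoff r R x ^ k) R I where
  contDiffOn := hξ.neg.exp.mul
    (((radialCutoff.contDiff r R).comp contDiff_snd).pow k).contDiffOn
  nonneg t _ x := mul_nonneg (Real.exp_pos _).le (pow_nonneg (radialCutoff.nonneg r R x) k)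
  le_one t ht x := mul_le_one₀ (Real.exp_le_one_iff.2 (neg_nonpos.2 (hξ₀ t ht x)))
    (pow_nonneg (radialCutoff.nonneg r R x) k)
    (pow_le_one₀ (radialCutoff.nonneg r R x) (radialCutoff.le_one r R x))
  eq_zero t _ x hx := by
    rw [radialCutoff.eq_zero hr hrR (by simpa using hx), zero_pow hk, mul_zero]

theorem pow_le_pow_succ_div_add_pow {y τ : ℝ} (hy : 0 ≤ y) (hτ : 0 < τ) (m : ℕ) :
    y ^ m ≤ y ^ (m + 1) / τ + τ ^ m := by
  rcases le_total τ y with h | h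
  · have : y ^ m ≤ y ^ (m + 1) / τ := by
      rw [le_div_iff₀ hτ, pow_succ]
      gcongr
    linarith [pow_nonneg hτ.le m]
  · have : y ^ m ≤ τ ^ m := by gcongr
    linarith [div_nonneg (pow_nonneg hy (m + 1)) hτ.le]

variable [NormedSpace ℝ E]

theorem energyRate_exp_neg_sqrt_mul_pow_le {η : E → ℝ} {x : E} (hη : DifferentiableAt ℝ η x)
    {D t : ℝ} (hD : ‖fderiv ℝ η x‖ ≤ D) (ht : 0 < t) (m : ℕ) :
    energyRate (fun t x => Real.exp (-(2 * ((m + 1) * D) ^ 2 * √t)) * η x ^ (m + 1)) t x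
      ≤ ((m + 1) * D) ^ 2 * √t ^ m := by
  set A := ((m + 1) * D) ^ 2
  set e := Real.exp (-(2 * A * √t))
  have hsqrt : 0 < √t := Real.sqrt_pos.2 ht
  have hderiv : deriv (fun τ => Real.exp (-(2 * A * √τ)) * η x ^ (m + 1)) t
      = -(A / √t) * (e * η x ^ (m + 1)) := by
    rw [((((Real.hasDerivAt_sqrt ht.ne').const_mul (2 * A)).fun_neg.exp).mul_const
      (η x ^ (m + 1))).deriv]
    ring
  have hfderiv : ‖fderiv ℝ (fun y => e * η y ^ (m + 1)) x‖ ≤ e * ((m + 1) * |η x| ^ m * D) := by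
    rw [((hη.hasFDerivAt.pow (m + 1)).const_mul e).fderiv]
    simp only [norm_smul, norm_mul, norm_pow, Real.norm_eq_abs, e, Real.abs_exp,
      add_tsub_cancel_right, nsmul_eq_mul, Nat.cast_add_one]
    rw [abs_of_nonneg (by positivity : (0 : ℝ) ≤ m + 1)]
    gcongr
  have he : e ^ 2 ≤ 1 := pow_le_one₀ (Real.exp_pos _).le
    (Real.exp_le_one_iff.2 (neg_nonpos.2 (by positivity)))
  calc e * η x ^ (m + 1) * deriv (fun τ => Real.exp (-(2 * A * √τ)) * η x ^ (m + 1)) t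
        + ‖fderiv ℝ (fun y => e * η y ^ (m + 1)) x‖ ^ 2
      ≤ e * η x ^ (m + 1) * (-(A / √t) * (e * η x ^ (m + 1)))
        + (e * ((m + 1) * |η x| ^ m * D)) ^ 2 := by
        rw [hderiv]
        gcongr
    _ = e ^ 2 * (A * ((η x ^ 2) ^ m - (η x ^ 2) ^ (m + 1) / √t)) := by
        have habs : (|η x| ^ m) ^ 2 = (η x ^ 2) ^ m := by rw [pow_right_comm, sq_abs]
        simp only [A]
        linear_combination (e * (m + 1) * D) ^ 2 * habs
    _ ≤ e ^ 2 * (A * √t ^ m) := by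
        gcongr
        linarith [pow_le_pow_succ_div_add_pow (sq_nonneg (η x)) hsqrt m]
    _ ≤ A * √t ^ m := mul_le_of_le_one_left (by positivity) he

theorem norm_fderiv_exp_neg_sq_div_mul_le {η ρ : E → ℝ} {x : E} (hη : DifferentiableAt ℝ η x)
    (hρ : DifferentiableAt ℝ ρ x) {τ : ℝ} (hτ : 0 < τ) :
    ‖fderiv ℝ (fun y => Real.exp (-(ρ y ^ 2 / (8 * τ))) * η y) x‖
      ≤ Real.exp (-(ρ x ^ 2 / (8 * τ))) * ‖fderiv ℝ η x‖
        + Real.exp (-(ρ x ^ 2 / (8 * τ))) * |η x| * (|ρ x| / (4 * τ) * ‖fderiv ℝ ρ x‖) := by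
  have hexponent : HasFDerivAt (fun y => -(ρ y ^ 2 / (8 * τ)))
      (-(ρ x / (4 * τ)) • fderiv ℝ ρ x) x := by
    simp only [div_eq_mul_inv]
    refine ((hρ.hasFDerivAt.pow 2).mul_const (8 * τ)⁻¹).fun_neg.congr_fderiv ?_
    rw [← neg_smul, nsmul_eq_mul, smul_smul]
    congr 1
    field_simp
    ring
  rw [(hexponent.exp.fun_mul hη.hasFDerivAt).fderiv]
  refine (norm_add_le _ _).trans_eq ?_
  simp only [norm_smul, norm_neg, norm_div, Real.norm_eq_abs, Real.abs_exp]
  rw [abs_of_pos (by positivity : 0 < 4 * τ)]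
  ring

-- The factor `8` lets the time derivative of the exponent absorb the square of its gradient.
theorem energyRate_exp_neg_sq_div_mul_le {η ρ : E → ℝ} {x : E} (hη : DifferentiableAt ℝ η x)
    (hρ : DifferentiableAt ℝ ρ x) (hρ' : ‖fderiv ℝ ρ x‖ ≤ 1) {σ t : ℝ} (ht : t < σ) :
    energyRate (fun t x => Real.exp (-(ρ x ^ 2 / (8 * (σ - t)))) * η x) t x
      ≤ 2 * (Real.exp (-(ρ x ^ 2 / (8 * (σ - t)))) * ‖fderiv ℝ η x‖) ^ 2 := by
  have hσ : 0 < σ - t := sub_pos.2 ht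
  set e := Real.exp (-(ρ x ^ 2 / (8 * (σ - t))))
  have hderiv : deriv (fun τ => Real.exp (-(ρ x ^ 2 / (8 * (σ - τ)))) * η x) t
      = -(ρ x ^ 2 / (8 * (σ - t) ^ 2)) * (e * η x) := by
    have hexponent := ((((hasDerivAt_id' t).const_sub σ).const_mul 8).fun_inv
      (by positivity)).const_mul (ρ x ^ 2)
    simp only [div_eq_mul_inv]
    rw [(hexponent.fun_neg.exp.mul_const (η x)).deriv]
    simp only [e]
    field_simp
  calc e * η x * deriv (fun τ => Real.exp (-(ρ x ^ 2 / (8 * (σ - τ)))) * η x) t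
        + ‖fderiv ℝ (fun y => Real.exp (-(ρ y ^ 2 / (8 * (σ - t)))) * η y) x‖ ^ 2
      ≤ e * η x * (-(ρ x ^ 2 / (8 * (σ - t) ^ 2)) * (e * η x))
        + (e * ‖fderiv ℝ η x‖ + e * |η x| * (|ρ x| / (4 * (σ - t)) * 1)) ^ 2 := by
        rw [hderiv]
        gcongr
        exact (norm_fderiv_exp_neg_sq_div_mul_le hη hρ hσ).trans (by gcongr)
    _ ≤ e * η x * (-(ρ x ^ 2 / (8 * (σ - t) ^ 2)) * (e * η x))
        + 2 * ((e * ‖fderiv ℝ η x‖) ^ 2 + (e * |η x| * (|ρ x| / (4 * (σ - t)) * 1)) ^ 2) := by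
        gcongr
        exact add_sq_le
    _ = 2 * (e * ‖fderiv ℝ η x‖) ^ 2 := by
        simp only [mul_pow, div_pow, sq_abs]
        field_simp
        ring

theorem energyRate_exp_neg_sq_div_mul_le_exp {η ρ : E → ℝ} {x : E} (hη : DifferentiableAt ℝ η x)
    (hρ : DifferentiableAt ℝ ρ x) (hρ' : ‖fderiv ℝ ρ x‖ ≤ 1) {D d σ t τ : ℝ}
    (hD : ‖fderiv ℝ η x‖ ≤ D) (hd : 0 ≤ d) (hdρ : fderiv ℝ η x ≠ 0 → d ≤ ρ x)
    (ht : t < σ) (hτ : σ - t ≤ 2 * τ) :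
    energyRate (fun t x => Real.exp (-(ρ x ^ 2 / (8 * (σ - t)))) * η x) t x
      ≤ 2 * D ^ 2 * Real.exp (-(d ^ 2 / (8 * τ))) := by
  refine (energyRate_exp_neg_sq_div_mul_le hη hρ hρ' ht).trans ?_
  rw [mul_pow, ← Real.exp_nat_mul, mul_assoc 2, mul_comm (D ^ 2), mul_neg]
  by_cases hη' : fderiv ℝ η x = 0
  · rw [hη', norm_zero, zero_pow two_ne_zero, mul_zero, mul_zero]
    positivity
  · have hσ : 0 < σ - t := sub_pos.2 ht
    have hexp : d ^ 2 / (8 * τ) ≤ (2 : ℕ) * (ρ x ^ 2 / (8 * (σ - t))) :=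
      calc d ^ 2 / (8 * τ) = d ^ 2 / (4 * (2 * τ)) := by ring
        _ ≤ ρ x ^ 2 / (4 * (σ - t)) := by
          gcongr
          exact hdρ hη'
        _ = (2 : ℕ) * (ρ x ^ 2 / (8 * (σ - t))) := by
          field_simp
          ring
    gcongr

end Weights

section EnergyEstimates

variable {E : Type*} [NormedAddCommGroup E] [InnerProductSpace ℝ E] [FiniteDimensional ℝ E]
  [MeasurableSpace E] [BorelSpace E]

theorem IsHeatSolutionOn.localEnergy_le_add_integral_sqrt_pow {u : ℝ → E → ℝ} {I : Set ℝ}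
    (hu : IsHeatSolutionOn u I) (hI : IsOpen I) {r R D s T : ℝ} (hr : 0 ≤ r) (hrR : r < R)
    (hD : ∀ x : E, ‖fderiv ℝ (radialCutoff r R) x‖ ≤ D) (hs : 0 < s) (hsT : s ≤ T)
    (hsub : Icc s T ⊆ I) (m : ℕ) :
    Real.exp (-(2 * ((m + 1) * D) ^ 2 * √T)) ^ 2 * localEnergy u r T
      ≤ localEnergy u R s
        + 2 * (((m + 1) * D) ^ 2 * ∫ t in s..T, √t ^ m * localEnergy u R t) := by
  set A := ((m + 1) * D) ^ 2
  have hψ : IsEnergyWeight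
      (fun t (x : E) => Real.exp (-(2 * A * √t)) * radialCutoff r R x ^ (m + 1)) R (I ∩ Ioi 0) :=
    isEnergyWeight_exp_neg_mul_radialCutoff_pow hr hrR m.succ_ne_zero
      (contDiffOn_const.mul (contDiffOn_fst.sqrt fun p hp => hp.1.2.ne'))
      fun t _ _ => by positivity
  have henergy := (hu.mono inter_subset_left).localEnergy_le_of_isEnergyWeight
    (hI.inter isOpen_Ioi) hψ hsT (fun t ht => ⟨hsub ht, hs.trans_le ht.1⟩)
    (g := fun t => A * √t ^ m) (by fun_prop)
    (fun t ht x _ => energyRate_exp_neg_sqrt_mul_pow_le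
      ((radialCutoff.contDiff r R).differentiable one_ne_zero x) (hD x) (hs.trans ht.1) m)
    (Real.exp_pos (-(2 * A * √T))).le fun x hx => by
      rw [radialCutoff.eq_one hr hrR (mem_ball_zero_iff.1 hx).le, one_pow, mul_one]
  simpa only [mul_assoc A, intervalIntegral.integral_const_mul] using henergy

theorem integral_sqrt_pow_mul_le_integral_rpow_mul {f : ℝ → ℝ} {a s T : ℝ} {m : ℕ}
    (ham : 2 * a ≤ m) (hs : 0 < s) (hsT : s ≤ T) (hT : T ≤ 1) (hf : ContinuousOn f (Icc s T))
    (hf₀ : ∀ t ∈ Icc s T, 0 ≤ f t) :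
    ∫ t in s..T, √t ^ m * f t ≤ ∫ t in s..T, t ^ a * f t := by
  refine intervalIntegral.integral_mono_on hsT
    (ContinuousOn.intervalIntegrable_of_Icc hsT (by fun_prop))
    (ContinuousOn.intervalIntegrable_of_Icc hsT ((continuousOn_id.rpow_const
      fun t ht => Or.inl (hs.trans_le ht.1).ne').mul hf)) fun t ht => ?_
  have ht₀ : 0 < t := hs.trans_le ht.1
  refine mul_le_mul_of_nonneg_right ?_ (hf₀ t ht)
  rw [Real.sqrt_eq_rpow, ← Real.rpow_mul_natCast ht₀.le]
  exact Real.rpow_le_rpow_of_exponent_ge ht₀ (ht.2.trans hT) (by linarith)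

variable (E) in
theorem exists_localEnergy_le_add_integral_rpow (a : ℝ) :
    ∃ K : ℝ, 1 ≤ K ∧ ∀ {u : ℝ → E → ℝ} {I : Set ℝ}, IsHeatSolutionOn u I → IsOpen I →
      ∀ {r s T : ℝ}, 1 ≤ r → 0 < s → s ≤ T → T ≤ 1 → Icc s T ⊆ I →
        localEnergy u r T
          ≤ K * (localEnergy u (2 * r) s + ∫ t in s..T, t ^ a * localEnergy u (2 * r) t) := by
  obtain ⟨D, hD, hbound⟩ := radialCutoff.exists_norm_fderiv_le (E := E)
  set m := ⌈2 * a⌉₊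
  set A := ((m + 1) * D) ^ 2 with hA
  have hA₀ : 0 ≤ A := sq_nonneg _
  refine ⟨Real.exp (4 * A) * (1 + 2 * A), one_le_mul_of_one_le_of_one_le
    (Real.one_le_exp (by positivity)) (by linarith), ?_⟩
  intro u I hu hI r s T hr hs hsT hT hsub
  have hmono : ∫ t in s..T, √t ^ m * localEnergy u (2 * r) t
      ≤ ∫ t in s..T, t ^ a * localEnergy u (2 * r) t :=
    integral_sqrt_pow_mul_le_integral_rpow_mul (Nat.le_ceil _) hs hsT hT
      ((hu.continuousOn_localEnergy hI (2 * r)).mono hsub) fun t _ => localEnergy_nonneg _ _ _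
  have henergy := hu.localEnergy_le_add_integral_sqrt_pow hI (by linarith) (by linarith)
    (fun x => (hbound (r := r) (R := 2 * r) (by linarith) (by linarith) x).trans
      (div_le_self hD.le (by linarith))) hs hsT hsub m
  have hexp : 1 ≤ Real.exp (4 * A) * Real.exp (-(2 * A * √T)) ^ 2 := by
    rw [← Real.exp_nat_mul, ← Real.exp_add, Nat.cast_two, Real.one_le_exp_iff]
    linarith [mul_le_of_le_one_right hA₀ (Real.sqrt_le_one.2 hT)]
  calc localEnergy u r T
      ≤ Real.exp (4 * A) * (Real.exp (-(2 * A * √T)) ^ 2 * localEnergy u r T) := by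
        rw [← mul_assoc]
        exact le_mul_of_one_le_left (localEnergy_nonneg _ _ _) hexp
    _ ≤ Real.exp (4 * A) * ((1 + 2 * A) * (localEnergy u (2 * r) s
          + ∫ t in s..T, t ^ a * localEnergy u (2 * r) t)) := by
        have hI₀ : 0 ≤ ∫ t in s..T, t ^ a * localEnergy u (2 * r) t :=
          intervalIntegral.integral_nonneg hsT fun t ht =>
            mul_nonneg (Real.rpow_nonneg (hs.le.trans ht.1) a) (localEnergy_nonneg _ _ _)
        have hs₀ := localEnergy_nonneg u (2 * r) s
        refine mul_le_mul_of_nonneg_left (henergy.trans ?_) (Real.exp_pos _).le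
        rw [← hA]
        linarith [mul_le_mul_of_nonneg_left hmono hA₀, mul_nonneg hA₀ hs₀]
    _ = _ := by rw [mul_assoc]

theorem IsHeatSolutionOn.localEnergy_le_add_exp_mul_integral {u : ℝ → E → ℝ} {I : Set ℝ}
    (hu : IsHeatSolutionOn u I) (hI : IsOpen I) {r r' R d D s T τ : ℝ} {ρ : E → ℝ} (hr : 0 ≤ r)
    (hrr' : r ≤ r') (hr'R : r' < R) (hd : 0 ≤ d)
    (hD : ∀ x : E, ‖fderiv ℝ (radialCutoff r' R) x‖ ≤ D)
    (hρ : ContDiff ℝ 1 ρ) (hρ' : ∀ x, ‖fderiv ℝ ρ x‖ ≤ 1) (hρ₀ : ∀ x ∈ ball 0 r, ρ x = 0)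
    (hρd : ∀ x, r' < ‖x‖ → d ≤ ρ x) (hsT : s ≤ T) (hT : T ≤ s + τ) (hτ : 0 < τ)
    (hsub : Icc s T ⊆ I) :
    localEnergy u r T ≤ localEnergy u R s
      + 4 * D ^ 2 * Real.exp (-(d ^ 2 / (8 * τ))) * ∫ t in s..T, localEnergy u R t := by
  set σ := s + 2 * τ
  set ψ : ℝ → E → ℝ := fun t x =>
    Real.exp (-(ρ x ^ 2 / (8 * (σ - t)))) * radialCutoff r' R x
  have hr' : 0 ≤ r' := hr.trans hrr'
  have hψ : IsEnergyWeight ψ R (I ∩ Iio σ) := by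
    simpa only [pow_one] using
      isEnergyWeight_exp_neg_mul_radialCutoff_pow (k := 1) hr' hr'R one_ne_zero
        (((hρ.comp contDiff_snd).pow 2).contDiffOn.div
          (contDiffOn_const.mul (contDiffOn_const.sub contDiffOn_fst)) fun p hp =>
            (mul_pos (by norm_num) (sub_pos.2 hp.1.2)).ne')
        fun t ht x => div_nonneg (sq_nonneg _) (mul_nonneg (by norm_num) (sub_pos.2 ht.2).le)
  have hrate : ∀ t ∈ Ioo s T, ∀ x ∈ ball (0 : E) R,
      energyRate ψ t x ≤ 2 * D ^ 2 * Real.exp (-(d ^ 2 / (8 * τ))) := fun t ht x _ =>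
    energyRate_exp_neg_sq_div_mul_le_exp
      ((radialCutoff.contDiff r' R).differentiable one_ne_zero x)
      (hρ.differentiable one_ne_zero x) (hρ' x) (hD x) hd
      (fun h => hρd x (not_le.1 fun hx => h (radialCutoff.fderiv_eq_zero hr' hr'R hx)))
      (by linarith [ht.2]) (by linarith [ht.1])
  have henergy := (hu.mono inter_subset_left).localEnergy_le_of_isEnergyWeight
    (hI.inter isOpen_Iio) hψ hsT (fun t ht => ⟨hsub ht, by simp only [mem_Iio]; linarith [ht.2]⟩)
    continuousOn_const hrate zero_le_one fun x hx => by
      have hx' : ‖x‖ ≤ r := (mem_ball_zero_iff.1 hx).le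
      simp [ψ, radialCutoff.eq_one hr' hr'R (hx'.trans hrr'), hρ₀ x hx]
  rw [intervalIntegral.integral_const_mul] at henergy
  linarith

variable (E) in
theorem exists_localEnergy_le_add_exp_mul_integral :
    ∃ C > 0, ∀ {u : ℝ → E → ℝ} {I : Set ℝ}, IsHeatSolutionOn u I → IsOpen I →
      ∀ {r s T τ : ℝ}, 0 < r → 0 < τ → s ≤ T → T ≤ s + τ → Icc s T ⊆ I →
        localEnergy u r T ≤ localEnergy u (2 * r) s
          + C / r ^ 2 * Real.exp (-(r ^ 2 / (C * τ))) * ∫ t in s..T, localEnergy u (2 * r) t := by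
  obtain ⟨C, hC, hbound⟩ := radialCutoff.exists_norm_fderiv_le (E := E)
  refine ⟨32 * C ^ 2, by positivity, ?_⟩
  intro u I hu hI r s T τ hr hτ hsT hT hsub
  set R := 3 * r / 2
  have hRr : R - r = r / 2 := by ring
  have hrR : r < R := by linarith
  have hR2 : 2 * r - R = r / 2 := by ring
  set ρ : E → ℝ := fun x => (R - r) / C * (1 - radialCutoff r R x)
  have hD (x : E) : ‖fderiv ℝ (radialCutoff R (2 * r)) x‖ ≤ 2 * C / r := by
    refine (hbound (by linarith) (by linarith) x).trans_eq ?_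
    rw [hR2]
    field_simp
  have henergy := hu.localEnergy_le_add_exp_mul_integral hI (ρ := ρ) (d := (R - r) / C) hr.le
    hrR.le (by linarith) (by rw [hRr]; positivity) hD
    (contDiff_const.mul (contDiff_const.sub (radialCutoff.contDiff _ _)))
    (fun x => radialCutoff.norm_fderiv_mul_one_sub_le_one hC hrR (hbound hr.le hrR x))
    (fun x hx => by simp [ρ, radialCutoff.eq_one hr.le hrR (mem_ball_zero_iff.1 hx).le])
    (fun x hx => by simp [ρ, radialCutoff.eq_zero hr.le hrR hx.le]) hsT hT hτ hsub
  have hI₀ : 0 ≤ ∫ t in s..T, localEnergy u (2 * r) t :=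
    intervalIntegral.integral_nonneg hsT fun t _ => localEnergy_nonneg _ _ _
  refine henergy.trans ?_
  rw [show ((R - r) / C) ^ 2 / (8 * τ) = r ^ 2 / (32 * C ^ 2 * τ) by rw [hRr]; field_simp; norm_num,
    show 4 * (2 * C / r) ^ 2 = 16 * C ^ 2 / r ^ 2 by field_simp; norm_num]
  gcongr
  norm_num

end EnergyEstimates

section DyadicDivergence

variable {L : ℝ → ℝ}

theorem lintegral_Icc_div_le (hL_pos : ∀ r > 0, 0 < L r) (hL_mono : MonotoneOn L (Ioi 0))
    {x : ℝ} (hx : 0 < x) (y : ℝ) :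
    ∫⁻ s in Icc x y, ENNReal.ofReal (s / L s)
      ≤ ENNReal.ofReal (y / L x) * ENNReal.ofReal (y - x) := by
  rw [← Real.volume_Icc, ← setLIntegral_const]
  refine setLIntegral_mono measurable_const fun s hs => ENNReal.ofReal_le_ofReal ?_
  exact div_le_div₀ (hx.le.trans (hs.1.trans hs.2)) hs.2 (hL_pos x hx)
    (hL_mono hx (hx.trans_le hs.1) hs.1)

theorem Ioi_subset_iUnion_Icc_two_pow_mul {ρ : ℝ} (hρ : 0 < ρ) (c : ℝ) :
    Ioi c ⊆ Icc c ρ ∪ ⋃ j : ℕ, Icc (2 ^ j * ρ) (2 ^ (j + 1) * ρ) := by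
  intro x hx
  rcases le_total x ρ with h | h
  · exact Or.inl ⟨le_of_lt hx, h⟩
  · obtain ⟨j, hj, hj'⟩ := exists_nat_pow_near ((one_le_div hρ).2 h) one_lt_two
    exact Or.inr (mem_iUnion.2 ⟨j, (le_div_iff₀ hρ).1 hj, ((div_lt_iff₀ hρ).1 hj').le⟩)

theorem not_summable_sq_div_of_lintegral_eq_top (hL_pos : ∀ r > 0, 0 < L r)
    (hL_mono : MonotoneOn L (Ioi 0)) {c ρ : ℝ} (hc : 0 < c) (hρ : 0 < ρ)
    (hL_div : ∫⁻ r in Ioi c, ENNReal.ofReal (r / L r) = ⊤) :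
    ¬ Summable fun j : ℕ => (2 ^ j * ρ) ^ 2 / L (2 ^ j * ρ) := by
  intro hsum
  have hterm (j : ℕ) : ∫⁻ s in Icc (2 ^ j * ρ) (2 ^ (j + 1) * ρ), ENNReal.ofReal (s / L s)
      ≤ ENNReal.ofReal (2 * ((2 ^ j * ρ) ^ 2 / L (2 ^ j * ρ))) := by
    have hx : 0 < 2 ^ j * ρ := by positivity
    refine (lintegral_Icc_div_le hL_pos hL_mono hx _).trans_eq ?_
    rw [← ENNReal.ofReal_mul (div_nonneg (by positivity) (hL_pos _ hx).le)]
    congr 1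
    ring
  refine (lt_top_iff_ne_top.1 ?_) hL_div
  calc ∫⁻ r in Ioi c, ENNReal.ofReal (r / L r)
      ≤ (∫⁻ r in Icc c ρ, ENNReal.ofReal (r / L r))
          + ∑' j : ℕ, ∫⁻ r in Icc (2 ^ j * ρ) (2 ^ (j + 1) * ρ), ENNReal.ofReal (r / L r) :=
        (lintegral_mono_set (Ioi_subset_iUnion_Icc_two_pow_mul hρ c)).trans <|
          (lintegral_union_le _ _ _).trans (add_le_add_right (lintegral_iUnion_le _ _) _)
    _ ≤ ENNReal.ofReal (ρ / L c) * ENNReal.ofReal (ρ - c)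
          + ∑' j : ℕ, ENNReal.ofReal (2 * ((2 ^ j * ρ) ^ 2 / L (2 ^ j * ρ))) :=
        add_le_add (lintegral_Icc_div_le hL_pos hL_mono hc ρ) (ENNReal.tsum_le_tsum hterm)
    _ < ⊤ := ENNReal.add_lt_top.2
        ⟨ENNReal.mul_lt_top ENNReal.ofReal_lt_top ENNReal.ofReal_lt_top,
          (hsum.mul_left 2).tsum_ofReal_lt_top⟩

theorem exists_le_sum_sq_div_of_lintegral_eq_top (hL_pos : ∀ r > 0, 0 < L r)
    (hL_mono : MonotoneOn L (Ioi 0)) {b c l ρ : ℝ} (hb : 0 < b) (hc : 0 < c) (hl : 0 < l)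
    (hρ : 0 < ρ) (hL_div : ∫⁻ r in Ioi c, ENNReal.ofReal (r / L r) = ⊤) (T : ℝ) :
    ∃ k : ℕ, T ≤ ∑ j ∈ Finset.range k, (2 ^ j * ρ) ^ 2 / (b * L (l * (2 ^ j * ρ))) := by
  have hterm (j : ℕ) : (2 ^ j * ρ) ^ 2 / (b * L (l * (2 ^ j * ρ)))
      = (b * l ^ 2)⁻¹ * ((2 ^ j * (l * ρ)) ^ 2 / L (2 ^ j * (l * ρ))) := by
    have := (hL_pos (2 ^ j * (l * ρ)) (by positivity)).ne'
    rw [mul_left_comm l]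
    field_simp
  have hdiv := not_summable_sq_div_of_lintegral_eq_top hL_pos hL_mono hc (mul_pos hl hρ) hL_div
  rw [← summable_mul_left_iff (inv_pos.2 (by positivity : 0 < b * l ^ 2)).ne'] at hdiv
  simp only [← hterm] at hdiv
  refine (((not_summable_iff_tendsto_nat_atTop_of_nonneg fun j => ?_).1
    hdiv).eventually_ge_atTop T).exists
  exact div_nonneg (sq_nonneg _) (mul_pos hb (hL_pos _ (by positivity))).le

end DyadicDivergence

section Propagation

variable (E : Type*) [NormedAddCommGroup E] [InnerProductSpace ℝ E] [FiniteDimensional ℝ E]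
  [MeasurableSpace E] [BorelSpace E]

theorem exists_localEnergy_le_add_div_sq :
    ∃ C > 0, ∀ {u : ℝ → E → ℝ}, IsHeatSolutionOn u (Ioo 0 1) → ∀ {r H : ℝ}, 0 < r → 0 < H →
      (∀ t ∈ Ioo (0 : ℝ) 1, localEnergy u (2 * r) t ≤ Real.exp H) →
      ∀ {s T : ℝ}, 0 < s → s ≤ T → T < 1 → T - s ≤ r ^ 2 / (C * H) →
        localEnergy u r T ≤ localEnergy u (2 * r) s + C / r ^ 2 := by
  obtain ⟨C, hC, hbound⟩ := exists_localEnergy_le_add_exp_mul_integral E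
  refine ⟨C, hC, fun {u} hu {r H} hr hH hS {s T} hs hsT hT hTs => ?_⟩
  have hsub : Icc s T ⊆ Ioo 0 1 := fun t ht => ⟨hs.trans_le ht.1, ht.2.trans_lt hT⟩
  have hint : ∫ t in s..T, localEnergy u (2 * r) t ≤ Real.exp H :=
    calc ∫ t in s..T, localEnergy u (2 * r) t ≤ ∫ _ in s..T, Real.exp H :=
          intervalIntegral.integral_mono_on hsT
            (((hu.continuousOn_localEnergy isOpen_Ioo _).mono hsub).intervalIntegrable_of_Icc hsT)
            intervalIntegrable_const fun t ht => hS t (hsub ht)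
      _ = (T - s) * Real.exp H := by rw [intervalIntegral.integral_const, smul_eq_mul]
      _ ≤ Real.exp H := mul_le_of_le_one_left (Real.exp_pos _).le (by linarith)
  calc localEnergy u r T
      ≤ localEnergy u (2 * r) s + C / r ^ 2 * Real.exp (-(r ^ 2 / (C * (r ^ 2 / (C * H)))))
          * ∫ t in s..T, localEnergy u (2 * r) t :=
        hbound hu isOpen_Ioo hr (by positivity) hsT (by linarith) hsub
    _ ≤ localEnergy u (2 * r) s + C / r ^ 2 * Real.exp (-H) * Real.exp H := by
        rw [show r ^ 2 / (C * (r ^ 2 / (C * H))) = H by field_simp]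
        gcongr
    _ = localEnergy u (2 * r) s + C / r ^ 2 := by
        rw [mul_assoc, ← Real.exp_add, neg_add_cancel, Real.exp_zero, mul_one]

theorem exists_localEnergy_le_div_sq :
    ∃ C > 0, ∀ {u : ℝ → E → ℝ}, IsHeatSolutionOn u (Ioo 0 1) →
      (∀ R > 0, Tendsto (localEnergy u R) (𝓝[>] 0) (𝓝 0)) →
      ∀ {H : ℝ → ℝ}, (∀ r ≥ 1, 0 < H r) →
      (∀ r ≥ 1, ∀ t ∈ Ioo (0 : ℝ) 1, localEnergy u (2 * r) t ≤ Real.exp (H r)) →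
      ∀ (k : ℕ) {r T : ℝ}, 1 ≤ r → T ∈ Ioo (0 : ℝ) 1 →
        T ≤ ∑ j ∈ Finset.range k, (2 ^ j * r) ^ 2 / (C * H (2 ^ j * r)) →
        localEnergy u r T ≤ 2 * C / r ^ 2 := by
  obtain ⟨C, hC, hstep⟩ := exists_localEnergy_le_add_div_sq E
  refine ⟨C, hC, fun {u} hu hu₀ {H} hH hS k => ?_⟩
  induction k with
  | zero => exact fun _ hT hTsum => absurd hTsum (not_le.2 (by simpa using hT.1))
  | succ k ih =>
    intro r T hr hT hTsum
    have hr₀ : 0 < r := by linarith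
    have hHr := hH r hr
    set ε := r ^ 2 / (C * H r)
    have hε : 0 < ε := by positivity
    rcases le_or_gt T ε with hTε | hTε
    · have hlim := (hu₀ (2 * r) (by positivity)).add_const (C / r ^ 2)
      rw [zero_add] at hlim
      refine (ge_of_tendsto (b := localEnergy u r T) hlim ?_).trans (by gcongr; linarith)
      filter_upwards [Ioo_mem_nhdsGT hT.1] with s hs
      exact hstep hu hr₀ hHr (hS r hr) hs.1 hs.2.le hT.2 (by linarith [hs.1])
    · have hsum : T - ε ≤ ∑ j ∈ Finset.range k,
          (2 ^ j * (2 * r)) ^ 2 / (C * H (2 ^ j * (2 * r))) := by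
        simp only [Finset.sum_range_succ', pow_zero, one_mul, pow_succ (2 : ℝ), mul_assoc]
          at hTsum ⊢
        linarith
      calc localEnergy u r T
          ≤ localEnergy u (2 * r) (T - ε) + C / r ^ 2 :=
            hstep hu hr₀ hHr (hS r hr) (by linarith) (by linarith) hT.2 (by linarith)
        _ ≤ 2 * C / (2 * r) ^ 2 + C / r ^ 2 := by
            gcongr
            exact ih (by linarith) ⟨by linarith, by linarith [hT.2]⟩ hsum
        _ ≤ 2 * C / r ^ 2 := by
            rw [show 2 * C / (2 * r) ^ 2 + C / r ^ 2 = 3 / 2 * C / r ^ 2 by field_simp; norm_num]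
            gcongr
            norm_num

theorem exists_localEnergy_le_mul_of_integral_rpow_le (a : ℝ) :
    ∃ K : ℝ, 1 ≤ K ∧ ∀ {u : ℝ → E → ℝ}, IsHeatSolutionOn u (Ioo 0 1) → ∀ {r M : ℝ}, 1 ≤ r →
      Tendsto (localEnergy u (2 * r)) (𝓝[>] 0) (𝓝 0) →
      (∀ {s T : ℝ}, 0 < s → s ≤ T → T < 1 → ∫ t in s..T, t ^ a * localEnergy u (2 * r) t ≤ M) →
      ∀ t ∈ Ioo (0 : ℝ) 1, localEnergy u r t ≤ K * M := by
  obtain ⟨K, hK, hbound⟩ := exists_localEnergy_le_add_integral_rpow E a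
  refine ⟨K, hK, fun {u} hu {r M} hr hu₀ hM t ht => ?_⟩
  have hlim := (hu₀.add_const M).const_mul K
  rw [zero_add] at hlim
  refine ge_of_tendsto hlim ?_
  filter_upwards [Ioo_mem_nhdsGT ht.1] with s hs
  refine (hbound hu isOpen_Ioo hr hs.1 hs.2.le ht.2.le
    fun τ hτ => ⟨hs.1.trans_le hτ.1, hτ.2.trans_lt ht.2⟩).trans ?_
  gcongr
  exact hM hs.1 hs.2.le ht.2

end Propagation

theorem isHeatSolutionOn_of_deriv_eq_heatLap {n : ℕ} {u : ℝ → EuclideanSpace ℝ (Fin n) → ℝ}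
    {I : Set ℝ} (hu : ContDiffOn ℝ 2 (uncurry u) (I ×ˢ univ))
    (hu_sol : ∀ t ∈ I, ∀ x, deriv (fun s => u s x) t = heatLap (u t) x) :
    IsHeatSolutionOn u I :=
  ⟨hu, fun t ht x => by
    rw [hu_sol t ht x, heatLap_eq_laplacian (contDiff_of_contDiffOn_uncurry hu ht)]⟩

section Vanishing

variable {E : Type*} [NormedAddCommGroup E] [InnerProductSpace ℝ E] [FiniteDimensional ℝ E]
  [MeasurableSpace E] [BorelSpace E] {u : ℝ → E → ℝ} {I : Set ℝ} {t : ℝ}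

theorem IsHeatSolutionOn.lintegral_sq_eq_ofReal_localEnergy (hu : IsHeatSolutionOn u I)
    (ht : t ∈ I) (r : ℝ) :
    ∫⁻ x in ball 0 r, ENNReal.ofReal (u t x ^ 2) = ENNReal.ofReal (localEnergy u r t) :=
  (ofReal_integral_eq_lintegral_ofReal (integrableOn_ball_sq (hu.continuous ht) r)
    (Eventually.of_forall fun _ => sq_nonneg _)).symm

theorem IsHeatSolutionOn.tendsto_localEnergy (hu : IsHeatSolutionOn u I) {l : Filter ℝ}
    (hl : I ∈ l) {r : ℝ}
    (h : Tendsto (fun t => ∫⁻ x in ball 0 r, ENNReal.ofReal (u t x ^ 2)) l (𝓝 0)) :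
    Tendsto (localEnergy u r) l (𝓝 0) := by
  refine ((ENNReal.tendsto_toReal ENNReal.zero_ne_top).comp h).congr' ?_
  filter_upwards [hl] with t ht
  simp only [comp_apply, hu.lintegral_sq_eq_ofReal_localEnergy ht r,
    ENNReal.toReal_ofReal (localEnergy_nonneg u r t)]

theorem IsHeatSolutionOn.integral_rpow_mul_localEnergy_le (hu : IsHeatSolutionOn u (Ioo 0 1))
    {a r M : ℝ} (hM : 0 ≤ M)
    (h : ∫⁻ t in Ioc (0 : ℝ) 1, ENNReal.ofReal (t ^ a) *
      ∫⁻ x in ball 0 r, ENNReal.ofReal (u t x ^ 2) ≤ ENNReal.ofReal M)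
    {s T : ℝ} (hs : 0 < s) (hsT : s ≤ T) (hT : T < 1) :
    ∫ t in s..T, t ^ a * localEnergy u r t ≤ M := by
  have hsub : Ioc s T ⊆ Ioo 0 1 := fun t ht => ⟨hs.trans ht.1, ht.2.trans_lt hT⟩
  have hcont : ContinuousOn (fun t => t ^ a * localEnergy u r t) (Ioc s T) :=
    (continuousOn_id.rpow_const fun t ht => Or.inl (hsub ht).1.ne').mul
      ((hu.continuousOn_localEnergy isOpen_Ioo r).mono hsub)
  have hnonneg : ∀ t ∈ Ioc s T, 0 ≤ t ^ a * localEnergy u r t := fun t ht =>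
    mul_nonneg (Real.rpow_nonneg (hsub ht).1.le _) (localEnergy_nonneg u r t)
  rw [intervalIntegral.integral_of_le hsT, integral_eq_lintegral_of_nonneg_ae
    (ae_restrict_of_forall_mem measurableSet_Ioc hnonneg)
    (hcont.aestronglyMeasurable measurableSet_Ioc)]
  refine ENNReal.toReal_le_of_le_ofReal hM (le_trans ?_ h)
  calc ∫⁻ t in Ioc s T, ENNReal.ofReal (t ^ a * localEnergy u r t)
      = ∫⁻ t in Ioc s T, ENNReal.ofReal (t ^ a) *
          ∫⁻ x in ball 0 r, ENNReal.ofReal (u t x ^ 2) := by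
        refine setLIntegral_congr_fun measurableSet_Ioc fun t ht => ?_
        simp only [hu.lintegral_sq_eq_ofReal_localEnergy (hsub ht) r,
          ENNReal.ofReal_mul (Real.rpow_nonneg (hsub ht).1.le a)]
    _ ≤ _ := lintegral_mono_set (Ioc_subset_Ioc hs.le hT.le)

theorem IsHeatSolutionOn.eq_zero_of_tendsto_localEnergy (hu : IsHeatSolutionOn u I) (ht : t ∈ I)
    (h : Tendsto (fun r => localEnergy u r t) atTop (𝓝 0)) (x : E) : u t x = 0 := by
  have hzero : localEnergy u (‖x‖ + 1) t = 0 := by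
    refine le_antisymm (ge_of_tendsto h ?_) (localEnergy_nonneg _ _ _)
    filter_upwards [eventually_ge_atTop (‖x‖ + 1)] with r hr using hu.localEnergy_mono ht hr
  have hae := (setIntegral_eq_zero_iff_of_nonneg_ae (Eventually.of_forall fun _ => sq_nonneg _)
    (integrableOn_ball_sq (hu.continuous ht) _)).1 hzero
  refine Measure.eqOn_open_of_ae_eq (μ := volume) (f := u t) (g := 0)
    (hae.mono fun y hy => sq_eq_zero_iff.1 hy) isOpen_ball (hu.continuous ht).continuousOn
    continuousOn_const ?_
  simp

variable {L : ℝ → ℝ}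

theorem IsHeatSolutionOn.exists_localEnergy_le_exp_mul (hu : IsHeatSolutionOn u (Ioo 0 1))
    (hu₀ : ∀ R > 0, Tendsto (localEnergy u R) (𝓝[>] 0) (𝓝 0)) {a : ℝ}
    (hL_pos : ∀ r > 0, 0 < L r) (hL_mono : MonotoneOn L (Ioi 0))
    (hgrowth : ∀ R > 0, ∀ {s T : ℝ}, 0 < s → s ≤ T → T < 1 →
      ∫ t in s..T, t ^ a * localEnergy u R t ≤ Real.exp (L R)) :
    ∃ κ > 0, ∀ r ≥ 1, ∀ t ∈ Ioo (0 : ℝ) 1, localEnergy u r t ≤ Real.exp (κ * L (2 * r)) := by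
  obtain ⟨K, hK, hpointwise⟩ := exists_localEnergy_le_mul_of_integral_rpow_le E a
  have hL₁ : 0 < L 1 := hL_pos 1 one_pos
  have hlogK : 0 ≤ Real.log K := Real.log_nonneg hK
  refine ⟨1 + Real.log K / L 1, by positivity, fun r hr t ht => ?_⟩
  have hL₁_le : L 1 ≤ L (2 * r) :=
    hL_mono (mem_Ioi.2 one_pos) (mem_Ioi.2 (by linarith)) (by linarith)
  calc localEnergy u r t
      ≤ K * Real.exp (L (2 * r)) :=
        hpointwise hu hr (hu₀ _ (by linarith)) (hgrowth (2 * r) (by linarith)) t ht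
    _ = Real.exp (L (2 * r) + Real.log K) := by
        rw [Real.exp_add, Real.exp_log (by linarith), mul_comm]
    _ ≤ Real.exp ((1 + Real.log K / L 1) * L (2 * r)) := by
        rw [Real.exp_le_exp, one_add_mul, div_mul_eq_mul_div]
        gcongr
        exact (le_div_iff₀ hL₁).2 (by gcongr)

theorem IsHeatSolutionOn.eq_zero_of_localEnergy_le_exp (hu : IsHeatSolutionOn u (Ioo 0 1))
    (hu₀ : ∀ R > 0, Tendsto (localEnergy u R) (𝓝[>] 0) (𝓝 0))
    (hL_pos : ∀ r > 0, 0 < L r) (hL_mono : MonotoneOn L (Ioi 0)) {c κ l : ℝ} (hc : 0 < c)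
    (hκ : 0 < κ) (hl : 0 < l) (hL_div : ∫⁻ r in Ioi c, ENNReal.ofReal (r / L r) = ⊤)
    (hbound : ∀ r ≥ 1, ∀ t ∈ Ioo (0 : ℝ) 1, localEnergy u (2 * r) t ≤ Real.exp (κ * L (l * r)))
    (ht : t ∈ Ioo 0 1) (x : E) : u t x = 0 := by
  obtain ⟨C, hC, hdecay⟩ := exists_localEnergy_le_div_sq E
  have hlim : Tendsto (fun r : ℝ => 2 * C / r ^ 2) atTop (𝓝 0) :=
    tendsto_const_nhds.div_atTop (tendsto_pow_atTop two_ne_zero)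
  refine hu.eq_zero_of_tendsto_localEnergy ht (squeeze_zero' (Eventually.of_forall fun r =>
    localEnergy_nonneg u r t) ?_ hlim) x
  filter_upwards [eventually_ge_atTop 1] with r hr
  obtain ⟨k, hk⟩ := exists_le_sum_sq_div_of_lintegral_eq_top hL_pos hL_mono (mul_pos hC hκ) hc hl
    (by linarith : 0 < r) hL_div t
  exact hdecay hu hu₀ (H := fun r => κ * L (l * r))
    (fun r hr => mul_pos hκ (hL_pos _ (mul_pos hl (by linarith)))) hbound k hr ht
    (by simpa only [mul_assoc] using hk)

theorem heat_equation_uniqueness_time_weighted_L2_general {u₁ u₂ : ℝ → E → ℝ}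
    (hu₁ : IsHeatSolutionOn u₁ (Ioo 0 1)) (hu₂ : IsHeatSolutionOn u₂ (Ioo 0 1))
    (hu₁_cont : ContinuousOn (uncurry u₁) (Ioc 0 1 ×ˢ univ))
    (hu₂_cont : ContinuousOn (uncurry u₂) (Ioc 0 1 ×ˢ univ))
    (h_init : ∀ R > 0, Tendsto (fun t => ∫⁻ x in ball 0 R, ENNReal.ofReal ((u₁ t x - u₂ t x) ^ 2))
      (𝓝[>] 0) (𝓝 0))
    (a : ℝ) (hL_pos : ∀ r > 0, 0 < L r) (hL_mono : MonotoneOn L (Ioi 0))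
    (hL_div : ∫⁻ r in Ioi 1, ENNReal.ofReal (r / L r) = ⊤)
    (h_growth : ∀ r > 0, ∫⁻ t in Ioc (0 : ℝ) 1, ENNReal.ofReal (t ^ a) *
      ∫⁻ x in ball 0 r, ENNReal.ofReal ((u₁ t x - u₂ t x) ^ 2) ≤ ENNReal.ofReal (Real.exp (L r))) :
    ∀ t ∈ Ioc (0 : ℝ) 1, ∀ x, u₁ t x = u₂ t x := by
  have hu := hu₁.sub isOpen_Ioo hu₂
  have hu₀ (R : ℝ) (hR : R > 0) := hu.tendsto_localEnergy (Ioo_mem_nhdsGT one_pos) (h_init R hR)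
  obtain ⟨κ, hκ, hbound⟩ := hu.exists_localEnergy_le_exp_mul hu₀ hL_pos hL_mono fun R hR =>
    hu.integral_rpow_mul_localEnergy_le (Real.exp_pos _).le (h_growth R hR)
  have heq (x : E) : EqOn (fun t => u₁ t x) (fun t => u₂ t x) (Ioo 0 1) := fun t ht =>
    sub_eq_zero.1 <| hu.eq_zero_of_localEnergy_le_exp hu₀ hL_pos hL_mono one_pos hκ
      (by norm_num : (0 : ℝ) < 2 * 2) hL_div
      (fun r hr t ht => by simpa only [mul_assoc] using hbound (2 * r) (by linarith) t ht) ht x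
  have hcont {v : ℝ → E → ℝ} (hv : ContinuousOn (uncurry v) (Ioc 0 1 ×ˢ univ)) (x : E) :
      ContinuousOn (fun t => v t x) (Ioc 0 1) :=
    hv.comp (f := fun t => (t, x)) (by fun_prop) fun t ht => ⟨ht, mem_univ x⟩
  intro t ht x
  refine (heq x).of_subset_closure (hcont hu₁_cont x) (hcont hu₂_cont x) Ioo_subset_Ioc_self ?_ ht
  rw [closure_Ioo zero_ne_one]
  exact Ioc_subset_Icc_self

end Vanishing

/-- **Uniqueness form of Theorem 1 (Euclidean case).** Two smooth solutions of the
heat equation on `ℝⁿ × (0,1]` with the same initial data in the sense of `L²_loc`,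
whose difference satisfies the time-weighted `L²` growth bound
`∫₀¹ tᵃ ∫_{B(0,r)} (u₁ - u₂)² ≤ e^{L(r)}` with `∫₁^∞ r / L(r) dr = ∞`, coincide. -/
theorem heat_equation_uniqueness_time_weighted_L2 {n : ℕ}
    (u₁ u₂ : ℝ → EuclideanSpace ℝ (Fin n) → ℝ)
    (hu₁_smooth : ContDiffOn ℝ (⊤ : ℕ∞)
      (fun p : ℝ × EuclideanSpace ℝ (Fin n) => u₁ p.1 p.2) (Set.Ioc (0:ℝ) 1 ×ˢ Set.univ))
    (hu₂_smooth : ContDiffOn ℝ (⊤ : ℕ∞)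
      (fun p : ℝ × EuclideanSpace ℝ (Fin n) => u₂ p.1 p.2) (Set.Ioc (0:ℝ) 1 ×ˢ Set.univ))
    (hu₁_sol : ∀ t ∈ Set.Ioc (0:ℝ) 1, ∀ x, deriv (fun s => u₁ s x) t = heatLap (u₁ t) x)
    (hu₂_sol : ∀ t ∈ Set.Ioc (0:ℝ) 1, ∀ x, deriv (fun s => u₂ s x) t = heatLap (u₂ t) x)
    (h_init : ∀ R > (0:ℝ),
      Tendsto (fun t => ∫⁻ x in ball (0 : EuclideanSpace ℝ (Fin n)) R,
        ENNReal.ofReal ((u₁ t x - u₂ t x) ^ 2)) (nhdsWithin 0 (Set.Ioi 0)) (nhds 0))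
    (a : ℝ) (ha : 0 < a)
    (L : ℝ → ℝ)
    (hL_pos : ∀ r > (0:ℝ), 0 < L r)
    (hL_mono : ∀ r s : ℝ, 0 < r → r ≤ s → L r ≤ L s)
    (hL_div : ∫⁻ r in Set.Ioi (1:ℝ), ENNReal.ofReal (r / L r) = ⊤)
    (h_growth : ∀ r > (0:ℝ),
      ∫⁻ t in Set.Ioc (0:ℝ) 1, ENNReal.ofReal (t ^ a) *
        ∫⁻ x in ball (0 : EuclideanSpace ℝ (Fin n)) r,
          ENNReal.ofReal ((u₁ t x - u₂ t x) ^ 2)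
      ≤ ENNReal.ofReal (Real.exp (L r))) :
    ∀ t ∈ Set.Ioc (0:ℝ) 1, ∀ x, u₁ t x = u₂ t x := by
  have h2 : (2 : WithTop ℕ∞) ≤ (⊤ : ℕ∞) := ENat.LEInfty.out
  exact heat_equation_uniqueness_time_weighted_L2_general
    ((isHeatSolutionOn_of_deriv_eq_heatLap (hu₁_smooth.of_le h2) hu₁_sol).mono Ioo_subset_Ioc_self)
    ((isHeatSolutionOn_of_deriv_eq_heatLap (hu₂_smooth.of_le h2) hu₂_sol).mono Ioo_subset_Ioc_self)
    hu₁_smooth.continuousOn hu₂_smooth.continuousOn h_init a hL_pos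
    (fun r hr s _ hrs => hL_mono r s hr hrs) hL_div h_growth
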